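/- Let S ⊆ ℂⁿ be a locally closed set admitting a finite filtration S = S₀ ⊇ S₁ ⊇ ⋯ ⊇ S_m ⊇ S_{m+1} = ∅ by subsets, each S_k closed in S, such that for every k ∈ {0, …, m} the difference S_k ∖ S_{k+1} is a totally real C¹ embedded submanifold of ℂⁿ (possibly with components of different dimensions): for every p ∈ S_k ∖ S_{k+1} there exist an open neighborhood V of p in ℂⁿ, an integer d ≥ 0, an open set Ω ⊆ ℝᵈ, and a C¹ map g : Ω → ℂⁿ that is a homeomorphism onto (S_k ∖ S_{k+1}) ∩ V and whose real Fréchet derivative Dg(t) is injective with totally real range at every t ∈ Ω. Then there exist an open set U ⊆ ℂⁿ with S ⊆ U and a C² function ρ : U → ℝ that is strongly plurisubharmonic at every point of U. -/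

import Mathlib

open Topology

/-- The Levi form of a function `ρ : E → ℝ` on a complex normed space `E` at a
point `x`, evaluated on a vector `v`:
`L_ρ(x; v) = (1/4)(D²ρ(x)(v,v) + D²ρ(x)(iv,iv))`,
where `D²ρ(x)` is the second real Fréchet derivative. -/
noncomputable def leviForm {E : Type*} [NormedAddCommGroup E] [NormedSpace ℂ E]
    (ρ : E → ℝ) (x v : E) : ℝ :=
  (1/4) * (fderiv ℝ (fderiv ℝ ρ) x v v
    + fderiv ℝ (fderiv ℝ ρ) x (Complex.I • v) (Complex.I • v))

section Mollify

open MeasureTheory ContinuousLinearMap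
open scoped Convolution NNReal

variable {E : Type*} [NormedAddCommGroup E] [NormedSpace ℝ E] [FiniteDimensional ℝ E]

/-- Convolving a Lipschitz function with a compactly supported continuous kernel. -/
lemma conv_lipschitz {X : Type*} [NormedAddCommGroup X] [NormedSpace ℝ X] [CompleteSpace X]
    [MeasurableSpace E] [BorelSpace E] (μ : Measure E) [μ.IsAddHaarMeasure]
    (k : E → X) (hk : Continuous k) (hkc : HasCompactSupport k)
    (L : X →L[ℝ] ℝ →L[ℝ] X) (hL : ∀ x r, L x r = r • x)
    (H : E → ℝ) (κ : ℝ≥0) (hH : LipschitzWith κ H) (x y : E) :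
    ‖(k ⋆[L, μ] H) x - (k ⋆[L, μ] H) y‖ ≤ κ * (∫ t, ‖k t‖ ∂μ) * ‖x - y‖ := by
  have hHc := hH.continuous
  have int : ∀ x, Integrable (fun t => H (x - t) • k t) μ := by
    intro x
    have h1 : Continuous (fun t => H (x - t) • k t) :=
      (hHc.comp (continuous_const.sub continuous_id)).smul hk
    exact h1.integrable_of_hasCompactSupport (hkc.smul_left)
  have kint : Integrable k μ := hk.integrable_of_hasCompactSupport hkc
  simp only [MeasureTheory.convolution, hL]
  rw [← integral_sub (int x) (int y)]
  refine (norm_integral_le_of_norm_le (g := fun t => κ * ‖x - y‖ * ‖k t‖) ?_ ?_).trans ?_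
  · exact kint.norm.const_mul _
  · refine Filter.Eventually.of_forall fun t => ?_
    rw [← sub_smul, norm_smul]
    gcongr
    have := hH.dist_le_mul (x - t) (y - t)
    rw [dist_eq_norm, dist_eq_norm, sub_sub_sub_cancel_right] at this
    exact this
  · rw [integral_const_mul]
    apply le_of_eq; ring

lemma mollify_one : ∃ C : ℝ, 0 < C ∧ ∀ (κ : ℝ≥0) (H : E → ℝ), LipschitzWith κ H →
    ∃ h : E → ℝ, ContDiff ℝ 2 h ∧ (∀ x, |h x - H x| ≤ C * κ) ∧ (∀ x, ‖fderiv ℝ h x‖ ≤ C * κ) ∧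
      ∀ x, ‖fderiv ℝ (fderiv ℝ h) x‖ ≤ C * κ := by
  borelize E
  let μ : Measure E := Measure.addHaar
  let φ : ContDiffBump (0 : E) := ⟨1/2, 1, by norm_num, by norm_num⟩
  let η : E → ℝ := φ.normed μ
  have hη : ContDiff ℝ 2 η := by
    have := φ.contDiff_normed (μ := μ) (n := 2)
    exact_mod_cast this
  have hηc : HasCompactSupport η := φ.hasCompactSupport_normed
  have hη1 : ContDiff ℝ 1 η := hη.of_le (by norm_num)
  let I1 := ∫ t, ‖η t‖ ∂μ
  let I2 := ∫ t, ‖fderiv ℝ η t‖ ∂μ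
  have hI1 : 0 ≤ I1 := integral_nonneg fun _ => norm_nonneg _
  have hI2 : 0 ≤ I2 := integral_nonneg fun _ => norm_nonneg _
  refine ⟨1 + I1 + I2, by positivity, ?_⟩
  intro κ H hH
  have hκ : (0:ℝ) ≤ κ := κ.2
  have hloc : LocallyIntegrable H μ := hH.continuous.locallyIntegrable
  let h : E → ℝ := η ⋆[lsmul ℝ ℝ, μ] H
  have hder : ∀ x, HasFDerivAt h ((fderiv ℝ η ⋆[(lsmul ℝ ℝ : ℝ →L[ℝ] ℝ →L[ℝ] ℝ).precompL E, μ] H) x) x :=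
    fun x => hηc.hasFDerivAt_convolution_left _ hη1 hloc x
  have hfd : fderiv ℝ h = (fderiv ℝ η ⋆[(lsmul ℝ ℝ : ℝ →L[ℝ] ℝ →L[ℝ] ℝ).precompL E, μ] H) := by
    ext1 x; exact (hder x).fderiv
  have hle : ∀ a b c : ℝ, 0 ≤ b → a ≤ c → b * a ≤ c * b := fun a b c hb h => by
    rw [mul_comm]; exact mul_le_mul_of_nonneg_right h hb
  refine ⟨h, ?_, ?_, ?_, ?_⟩
  · have := HasCompactSupport.contDiff_convolution_left (n := 2) (lsmul ℝ ℝ : ℝ →L[ℝ] ℝ →L[ℝ] ℝ)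
      (μ := μ) (g := H) hηc (by exact_mod_cast hη) hloc
    exact_mod_cast this
  · intro x
    have := φ.dist_normed_convolution_le (μ := μ) (g := H) (x₀ := x) (ε := κ)
      hH.continuous.aestronglyMeasurable (by
        intro y hy
        have h1 := hH.dist_le_mul y x
        have h2 : dist y x < 1 := hy
        refine h1.trans ?_
        nlinarith)
    rw [Real.dist_eq] at this
    refine this.trans ?_
    nlinarith
  · intro x
    have hl : LipschitzWith ⟨κ * I1, by positivity⟩ h := by
      refine LipschitzWith.of_dist_le_mul fun x y => ?_
      rw [dist_eq_norm, dist_eq_norm]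
      exact conv_lipschitz μ η hη.continuous hηc _ (by intro x r; simp [mul_comm]) H κ hH x y
    refine (norm_fderiv_le_of_lipschitz ℝ hl).trans ?_
    exact hle _ _ _ hκ (by linarith)
  · intro x
    have hl : LipschitzWith ⟨κ * I2, by positivity⟩ (fderiv ℝ h) := by
      refine LipschitzWith.of_dist_le_mul fun x y => ?_
      rw [dist_eq_norm, dist_eq_norm, hfd]
      exact conv_lipschitz μ (fderiv ℝ η) (hη1.continuous_fderiv (by norm_num))
        (hηc.fderiv (𝕜 := ℝ)) _
        (by intro x r; ext v; simp [mul_comm]) H κ hH x y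
    refine (norm_fderiv_le_of_lipschitz ℝ hl).trans ?_
    exact hle _ _ _ hκ (by linarith)

lemma mollify : ∃ C : ℝ, 0 < C ∧ ∀ (κ : ℝ≥0) (H : E → ℝ), LipschitzWith κ H → ∀ s : ℝ, 0 < s →
    ∃ h : E → ℝ, ContDiff ℝ 2 h ∧ (∀ x, |h x - H x| ≤ C * κ * s) ∧
      (∀ x, ‖fderiv ℝ h x‖ ≤ C * κ) ∧
      ∀ x, ‖fderiv ℝ (fderiv ℝ h) x‖ ≤ C * κ / s := by
  obtain ⟨C, hC, hm⟩ := mollify_one (E := E)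
  refine ⟨C, hC, fun κ H hH s hs => ?_⟩
  obtain ⟨h, h2, hd0, hd1, hd2⟩ := hm κ (fun x => s⁻¹ * H (s • x)) (by
    refine LipschitzWith.of_dist_le_mul fun x y => ?_
    have := hH.dist_le_mul (s • x) (s • y)
    rw [dist_smul₀, Real.norm_of_nonneg hs.le] at this
    rw [Real.dist_eq] at this ⊢
    rw [← mul_sub, abs_mul, abs_of_pos (inv_pos.2 hs)]
    calc _ ≤ s⁻¹ * (κ * (s * dist x y)) := by gcongr
      _ = _ := by field_simp)
  have hdiff : Differentiable ℝ h := h2.differentiable (by norm_num)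
  have hdiff2 : Differentiable ℝ (fderiv ℝ h) :=
    (h2.fderiv_right (m := 1) (by norm_num)).differentiable (by norm_num)
  have hlin : ∀ x : E, HasFDerivAt (fun x : E => s⁻¹ • x) (s⁻¹ • ContinuousLinearMap.id ℝ E) x :=
    fun x => (hasFDerivAt_id x).const_smul s⁻¹
  have e1 : fderiv ℝ (fun x => s * h (s⁻¹ • x)) = fun x => fderiv ℝ h (s⁻¹ • x) := by
    ext1 x
    have := ((hdiff (s⁻¹ • x)).hasFDerivAt.comp x (hlin x)).const_mul s
    refine (this.fderiv).trans ?_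
    ext v
    simp
    field_simp
  refine ⟨fun x => s * h (s⁻¹ • x), ?_, ?_, ?_, ?_⟩
  · exact contDiff_const.mul (h2.comp (contDiff_const_smul s⁻¹))
  · intro x
    have := hd0 (s⁻¹ • x)
    simp only [smul_smul, mul_inv_cancel₀ hs.ne', one_smul] at this
    have e : s * h (s⁻¹ • x) - H x = s * (h (s⁻¹ • x) - s⁻¹ * H x) := by field_simp
    rw [e, abs_mul, abs_of_pos hs, mul_comm]
    gcongr
  · intro x
    rw [e1]; exact hd1 _
  · intro x
    rw [e1]
    have := ((hdiff2 (s⁻¹ • x)).hasFDerivAt.comp x (hlin x)).fderiv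
    have e2 : fderiv ℝ (fun x => fderiv ℝ h (s⁻¹ • x)) x
      = s⁻¹ • fderiv ℝ (fderiv ℝ h) (s⁻¹ • x) := by
      refine this.trans ?_
      ext v w
      simp
    rw [e2, div_eq_inv_mul]
    refine (ContinuousLinearMap.opNorm_smul_le _ _).trans ?_
    rw [Real.norm_of_nonneg (inv_pos.2 hs).le]
    gcongr
    exact hd2 _

lemma exists_bound_fderiv {G : Type*} [NormedAddCommGroup G] [NormedSpace ℝ G] (k : E → G)
    (hk : ContDiff ℝ 1 k) (hc : HasCompactSupport k) : ∃ T : ℝ, ∀ x, ‖fderiv ℝ k x‖ ≤ T := by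
  have h1 : Continuous (fderiv ℝ k) := hk.continuous_fderiv (by norm_num)
  have h2 : HasCompactSupport (fderiv ℝ k) := hc.fderiv (𝕜 := ℝ)
  exact h2.exists_bound_of_continuous h1

lemma exists_bump (p : E) (r : ℝ) (hr : 0 < r) : ∃ (θ : E → ℝ) (T : ℝ), ContDiff ℝ 2 θ ∧
    (∀ x, 0 ≤ θ x) ∧ (∀ x, θ x ≤ 1) ∧ (∀ x ∈ Metric.closedBall p r, θ x = 1) ∧
    tsupport θ ⊆ Metric.closedBall p (2 * r) ∧ (∀ x, ‖fderiv ℝ θ x‖ ≤ T) ∧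
    ∀ x, ‖fderiv ℝ (fderiv ℝ θ) x‖ ≤ T := by
  have hlt : r < 2 * r := by linarith
  obtain ⟨θ, hin, hout⟩ : ∃ θ : ContDiffBump p, θ.rIn = r ∧ θ.rOut = 2 * r :=
    ⟨⟨r, 2 * r, hr, hlt⟩, rfl, rfl⟩
  have hθ : ContDiff ℝ 2 (θ : E → ℝ) := θ.contDiff
  have hc : HasCompactSupport (θ : E → ℝ) := θ.hasCompactSupport
  have hc1 : HasCompactSupport (fderiv ℝ (θ : E → ℝ)) := hc.fderiv (𝕜 := ℝ)
  have hθ1 : ContDiff ℝ 1 (fderiv ℝ (θ : E → ℝ)) := hθ.fderiv_right (by norm_num)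
  obtain ⟨T1, hT1⟩ := exists_bound_fderiv (θ : E → ℝ) (hθ.of_le (by norm_num)) hc
  obtain ⟨T2, hT2⟩ := exists_bound_fderiv _ hθ1 hc1
  exact ⟨θ, max T1 T2, hθ, fun x => θ.nonneg, fun x => θ.le_one,
    fun x hx => θ.one_of_mem_closedBall (by rwa [hin]), by rw [θ.tsupport_eq, hout],
    fun x => (hT1 x).trans (le_max_left _ _), fun x => (hT2 x).trans (le_max_right _ _)⟩

end Mollify

section Levi

open Metric Set
open scoped NNReal

variable {E : Type*} [NormedAddCommGroup E] [NormedSpace ℂ E]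

lemma contDiffAt_fderiv_diff {f : E → ℝ} {x : E} (hf : ContDiffAt ℝ 2 f x) :
    DifferentiableAt ℝ (fderiv ℝ f) x :=
  (hf.fderiv_right (m := 1) (by norm_num)).differentiableAt (by norm_num)

lemma contDiffAt_ev_diff {f : E → ℝ} {x : E} (hf : ContDiffAt ℝ 2 f x) :
    ∀ᶠ y in 𝓝 x, DifferentiableAt ℝ f y := by
  filter_upwards [hf.eventually (by simp)] with y hy
  exact hy.differentiableAt (by norm_num)

lemma levi_congr {f g : E → ℝ} {x : E} (h : f =ᶠ[𝓝 x] g) (v : E) :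
    leviForm f x v = leviForm g x v := by
  have := (h.fderiv (𝕜 := ℝ)).fderiv_eq (𝕜 := ℝ)
  simp only [leviForm, this]

lemma levi_add {f g : E → ℝ} {x : E} (hf : ContDiffAt ℝ 2 f x) (hg : ContDiffAt ℝ 2 g x) (v : E) :
    leviForm (fun y => f y + g y) x v = leviForm f x v + leviForm g x v := by
  have e : fderiv ℝ (fun y => f y + g y) =ᶠ[𝓝 x] fun y => fderiv ℝ f y + fderiv ℝ g y := by
    filter_upwards [contDiffAt_ev_diff hf, contDiffAt_ev_diff hg] with y h1 h2
    exact fderiv_fun_add h1 h2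
  have e2 := e.fderiv_eq (𝕜 := ℝ)
  rw [fderiv_fun_add (contDiffAt_fderiv_diff hf) (contDiffAt_fderiv_diff hg)] at e2
  simp only [leviForm, e2, add_apply]
  ring

lemma levi_zero (x v : E) : leviForm (fun _ : E => (0:ℝ)) x v = 0 := by
  have : fderiv ℝ (fun _ : E => (0:ℝ)) = fun _ => 0 := by
    ext1 y; simp
  simp [leviForm, this]

lemma d2_mul {f g : E → ℝ} {x : E} (hf : ContDiffAt ℝ 2 f x) (hg : ContDiffAt ℝ 2 g x) (v : E) :
    fderiv ℝ (fderiv ℝ (fun y => f y * g y)) x v v =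
      f x * fderiv ℝ (fderiv ℝ g) x v v + 2 * (fderiv ℝ f x v * fderiv ℝ g x v)
      + g x * fderiv ℝ (fderiv ℝ f) x v v := by
  have e : fderiv ℝ (fun y => f y * g y) =ᶠ[𝓝 x]
      fun y => f y • fderiv ℝ g y + g y • fderiv ℝ f y := by
    filter_upwards [contDiffAt_ev_diff hf, contDiffAt_ev_diff hg] with y h1 h2
    exact fderiv_fun_mul h1 h2
  have h1 := (hf.differentiableAt (by norm_num)).hasFDerivAt.smul
    (contDiffAt_fderiv_diff hg).hasFDerivAt
  have h2 := (hg.differentiableAt (by norm_num)).hasFDerivAt.smul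
    (contDiffAt_fderiv_diff hf).hasFDerivAt
  have h3 := (h1.add h2).fderiv
  rw [e.fderiv_eq]
  refine (congrArg (fun L : E →L[ℝ] E →L[ℝ] ℝ => L v v) h3).trans ?_
  simp
  ring

lemma levi_const_mul {f : E → ℝ} {x : E} (hf : ContDiffAt ℝ 2 f x) (b : ℝ) (v : E) :
    leviForm (fun y => b * f y) x v = b * leviForm f x v := by
  have hb : ContDiffAt ℝ 2 (fun _ : E => b) x := contDiffAt_const
  have e0 : fderiv ℝ (fun _ : E => b) = fun _ => 0 := by ext1 y; simp
  simp only [leviForm, d2_mul hb hf, e0]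
  simp
  ring

lemma levi_sum {ι : Type*} (s : Finset ι) (q : ι → E → ℝ) (x : E)
    (hq : ∀ j, ContDiffAt ℝ 2 (q j) x) (v : E) :
    leviForm (fun y => ∑ j ∈ s, q j y) x v = ∑ j ∈ s, leviForm (q j) x v := by
  classical
  induction s using Finset.induction_on with
  | empty => simpa using levi_zero x v
  | insert a s ha ih =>
    simp only [Finset.sum_insert ha]
    rw [levi_add (hq a) (ContDiffAt.sum fun j _ => hq j), ih]

lemma d2_bound (θ h : E → ℝ) (l : E →L[ℝ] ℝ) (hθ : ContDiff ℝ 2 θ) (hh : ContDiff ℝ 2 h)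
    (x : E) (a s T N : ℝ) (ha : 0 ≤ a) (hs : 0 < s) (hs1 : s ≤ 1)
    (hθ0 : 0 ≤ θ x)
    (hT1 : ‖fderiv ℝ θ x‖ ≤ T) (hT2 : ‖fderiv ℝ (fderiv ℝ θ) x‖ ≤ T) (hN : ‖l‖ ≤ N)
    (h0 : |l x - h x| ≤ a * s) (h1 : ‖fderiv ℝ h x‖ ≤ a)
    (h2 : ‖fderiv ℝ (fderiv ℝ h) x‖ ≤ a / s) (v : E) :
    θ x * ((l v)^2 - 4 * a^2 * ‖v‖^2) - s * (4 * a * T * (N + a) + a^2 * T) * ‖v‖^2 ≤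
      fderiv ℝ (fderiv ℝ (fun y => θ y * ((l y - h y) * (l y - h y)))) x v v := by
  have hf : ContDiff ℝ 2 (fun y => l y - h y) := l.contDiff.sub hh
  have hd : fderiv ℝ (fun y => l y - h y) = fun y => l - fderiv ℝ h y := by
    ext1 y
    rw [fderiv_fun_sub l.differentiableAt (hh.differentiable (by norm_num) y), l.fderiv]
  have hd2 : fderiv ℝ (fun y => l - fderiv ℝ h y) x = - fderiv ℝ (fderiv ℝ h) x := by
    rw [fderiv_const_sub]
  rw [d2_mul hθ.contDiffAt (hf.mul hf).contDiffAt, d2_mul hf.contDiffAt hf.contDiffAt,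
    fderiv_fun_mul (hf.differentiable (by norm_num) x) (hf.differentiable (by norm_num) x), hd, hd2]
  simp only [add_apply, smul_apply,
    sub_apply, neg_apply, smul_eq_mul]
  have b1 : |fderiv ℝ h x v| ≤ a * ‖v‖ :=
    (ContinuousLinearMap.le_opNorm _ _).trans
      (mul_le_mul_of_nonneg_right h1 (norm_nonneg _))
  have b2 : |fderiv ℝ (fderiv ℝ h) x v v| ≤ a / s * ‖v‖ * ‖v‖ :=
    (ContinuousLinearMap.le_opNorm₂ _ _ _).trans
      (mul_le_mul_of_nonneg_right (mul_le_mul_of_nonneg_right h2 (norm_nonneg _))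
        (norm_nonneg _))
  have b3 : |fderiv ℝ θ x v| ≤ T * ‖v‖ :=
    (ContinuousLinearMap.le_opNorm _ _).trans
      (mul_le_mul_of_nonneg_right hT1 (norm_nonneg _))
  have b4 : |fderiv ℝ (fderiv ℝ θ) x v v| ≤ T * ‖v‖ * ‖v‖ :=
    (ContinuousLinearMap.le_opNorm₂ _ _ _).trans
      (mul_le_mul_of_nonneg_right (mul_le_mul_of_nonneg_right hT2 (norm_nonneg _))
        (norm_nonneg _))
  have b5 : |l v| ≤ N * ‖v‖ :=
    (ContinuousLinearMap.le_opNorm _ _).trans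
      (mul_le_mul_of_nonneg_right hN (norm_nonneg _))
  have hT : 0 ≤ T := (norm_nonneg _).trans hT1
  have hN0 : 0 ≤ N := (norm_nonneg _).trans hN
  set f := l x - h x
  set D := fderiv ℝ h x v
  set D2 := fderiv ℝ (fderiv ℝ h) x v v
  set G := fderiv ℝ θ x v
  set G2 := fderiv ℝ (fderiv ℝ θ) x v v
  set w := ‖v‖
  have hw : 0 ≤ w := norm_nonneg _
  have c1 : f * D2 ≤ a^2 * w^2 := by
    calc f * D2 ≤ |f| * |D2| := by rw [← abs_mul]; exact le_abs_self _
      _ ≤ (a * s) * (a / s * w * w) := by gcongr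
      _ = a^2 * w^2 := by field_simp
  have c2 : D^2 ≤ a^2 * w^2 := by
    rw [← sq_abs, ← mul_pow]; gcongr
  have c3 : -(f * (G * (l v - D))) ≤ (a * s) * ((T * w) * (N * w + a * w)) := by
    calc -(f * (G * (l v - D))) ≤ |f * (G * (l v - D))| := neg_le_abs _
      _ = |f| * (|G| * |l v - D|) := by rw [abs_mul, abs_mul]
      _ ≤ _ := by
        gcongr
        exact (abs_sub _ _).trans (add_le_add b5 b1)
  have c4 : -(f * f * G2) ≤ (a * s) * (a * s) * (T * w * w) := by
    calc -(f * f * G2) ≤ |f * f * G2| := neg_le_abs _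
      _ = |f| * |f| * |G2| := by rw [abs_mul, abs_mul]
      _ ≤ _ := by gcongr
  have c5 : (a * s) * (a * s) * (T * w * w) ≤ s * (a^2 * T) * w^2 := by
    have : s * s ≤ s := by nlinarith
    calc _ = (s * s) * (a^2 * T * w^2) := by ring
      _ ≤ s * (a^2 * T * w^2) := by gcongr
      _ = _ := by ring
  have c6 : (l v)^2 - 4 * a^2 * w^2 ≤
      f * -D2 + 2 * ((l v - D) * (l v - D)) + f * -D2 := by
    nlinarith [sq_nonneg (l v - 2 * D)]
  have c7 := mul_le_mul_of_nonneg_left c6 hθ0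
  linear_combination c7 + 4 * c3 + c4 + c5

lemma quad_lower {X : Type*} [TopologicalSpace X] [FiniteDimensional ℂ E] (K : Set X)
    (hK : IsCompact K) (Q : X → E → ℝ)
    (hQ : ContinuousOn (fun z : X × E => Q z.1 z.2) (K ×ˢ univ))
    (hom : ∀ x (t : ℝ) v, Q x (t • v) = t^2 * Q x v) :
    ∃ b : ℝ, (∀ x ∈ K, ∀ v, b * ‖v‖^2 ≤ Q x v) ∧
      ((∀ x ∈ K, ∀ v, v ≠ 0 → 0 < Q x v) → 0 < b) := by
  have : ProperSpace E := FiniteDimensional.proper ℂ E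
  have key : ∀ b : ℝ, (∀ x ∈ K, ∀ v ∈ sphere (0:E) 1, b ≤ Q x v) →
      ∀ x ∈ K, ∀ v, b * ‖v‖^2 ≤ Q x v := by
    intro b hb x hx v
    by_cases hv : v = 0
    · subst hv
      have := hom x 0 0
      simp at this
      simp [this]
    · have hn : 0 < ‖v‖ := norm_pos_iff.2 hv
      have h1 := hb x hx (‖v‖⁻¹ • v) (by
        simp [norm_smul, hn.ne'])
      rw [hom] at h1
      have e : Q x v = ‖v‖^2 * (‖v‖⁻¹^2 * Q x v) := by field_simp
      rw [e, mul_comm]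
      gcongr
  have hc : IsCompact (K ×ˢ sphere (0:E) 1) := hK.prod (isCompact_sphere _ _)
  rcases (K ×ˢ sphere (0:E) 1).eq_empty_or_nonempty with he | hne
  · refine ⟨1, key 1 ?_, fun _ => one_pos⟩
    intro x hx v hv
    have : (x, v) ∈ K ×ˢ sphere (0:E) 1 := ⟨hx, hv⟩
    rw [he] at this
    exact this.elim
  · obtain ⟨z, hz, hmin⟩ := hc.exists_isMinOn hne
      (hQ.mono (prod_mono le_rfl (subset_univ _)))
    refine ⟨Q z.1 z.2, key _ ?_, ?_⟩
    · intro x hx v hv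
      exact hmin (show (x, v) ∈ K ×ˢ sphere (0:E) 1 from ⟨hx, hv⟩)
    · intro h
      refine h _ hz.1 _ ?_
      intro h0
      have := hz.2
      rw [h0] at this
      simp at this

set_option maxHeartbeats 400000 in
lemma exists_local_fn [FiniteDimensional ℂ E] (M : Set E) (p : E) (T : Submodule ℝ E)
    (hT : ∀ v ∈ T, Complex.I • v ∈ T → v = 0)
    (hflat : ∀ (k : ℕ) (π : E →L[ℝ] (Fin k → ℝ)), (∀ v ∈ T, π v = 0) → ∀ κ : ℝ, 0 < κ →
      ∃ r > 0, ∀ x ∈ M ∩ ball p r, ∀ y ∈ M ∩ ball p r, ‖π x - π y‖ ≤ κ * ‖x - y‖)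
    (O : Set E) (hO : IsOpen O) (hp : p ∈ O) :
    ∃ r > 0, closedBall p r ⊆ O ∧ ∃ c > 0, ∀ ε > 0, ∃ ψ : E → ℝ, ContDiff ℝ 2 ψ ∧
      tsupport ψ ⊆ O ∧ (∀ x ∈ M, ∀ v, -ε * ‖v‖^2 ≤ leviForm ψ x v) ∧
      ∀ x ∈ M ∩ closedBall p r, ∀ v, c * ‖v‖^2 ≤ leviForm ψ x v := by
  have hfd : FiniteDimensional ℝ E := FiniteDimensional.complexToReal E
  -- defining functionals
  let b := Module.finBasis ℝ (E ⧸ T)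
  let k := Module.finrank ℝ (E ⧸ T)
  let π : E →L[ℝ] (Fin k → ℝ) :=
    LinearMap.toContinuousLinearMap ((b.equivFun : (E ⧸ T) →ₗ[ℝ] (Fin k → ℝ)) ∘ₗ T.mkQ)
  have hπ : ∀ v, π v = 0 ↔ v ∈ T := by
    intro v
    simp [π]
  let l : Fin k → E →L[ℝ] ℝ := fun j => (ContinuousLinearMap.proj j).comp π
  have hl : ∀ j v, l j v = π v j := fun j v => rfl
  obtain ⟨c0, hc0, hc0pos⟩ := quad_lower (E := E) (univ : Set Unit) isCompact_univ
    (fun _ v => ∑ j, ((l j v)^2 + (l j (Complex.I • v))^2))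
    (by fun_prop)
    (by
      intro _ t v
      rw [Finset.mul_sum]
      refine Finset.sum_congr rfl fun j _ => ?_
      rw [smul_comm Complex.I t v, map_smul, map_smul]
      simp only [smul_eq_mul]; ring)
  replace hc0 := hc0 () trivial
  replace hc0pos : 0 < c0 := hc0pos (by
    intro _ _ v hv
    by_contra hcon
    have hz : ∀ j, (l j v)^2 + (l j (Complex.I • v))^2 = 0 := by
      have hs := le_antisymm (not_lt.1 hcon) (Finset.sum_nonneg fun j _ => by positivity)
      intro j
      exact (Finset.sum_eq_zero_iff_of_nonneg (fun j _ => by positivity)).1 hs j (Finset.mem_univ j)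
    apply hv
    apply hT
    · rw [← hπ]; ext j
      have := hz j
      rw [← hl]
      show l j v = 0
      exact pow_eq_zero_iff (two_ne_zero) |>.1
        (le_antisymm (by linarith [sq_nonneg (l j (Complex.I • v))]) (sq_nonneg (l j v)))
    · rw [← hπ]; ext j
      have := hz j
      rw [← hl]
      show l j (Complex.I • v) = 0
      exact pow_eq_zero_iff (two_ne_zero) |>.1
        (le_antisymm (by linarith [sq_nonneg (l j v)]) (sq_nonneg (l j (Complex.I • v)))))
  obtain ⟨C, hC, hmol⟩ := mollify (E := E)
  -- the Lipschitz constant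
  obtain ⟨a, ha, hka⟩ : ∃ a : ℝ, 0 < a ∧ 8 * k * a^2 ≤ c0 / 2 := by
    refine ⟨min 1 (c0 / (16 * (k + 1))), by positivity, ?_⟩
    set a := min 1 (c0 / (16 * ((k:ℝ) + 1))) with hadef
    have h1 : a ≤ 1 := min_le_left _ _
    have h2 : a ≤ c0 / (16 * (k + 1)) := min_le_right _ _
    have h0 : 0 < a := by positivity
    have h3 : a * (16 * (k + 1)) ≤ c0 := (le_div_iff₀ (by positivity)).1 h2
    have h4 : a^2 ≤ a := by nlinarith
    have hk0 : (0:ℝ) ≤ k := by positivity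
    nlinarith
  let κ : ℝ≥0 := ⟨a / C, by positivity⟩
  have hκC : C * κ = a := by
    show C * (a / C) = a
    field_simp
  have hκ : 0 < (κ:ℝ) := by show 0 < a / C; positivity
  obtain ⟨r0, hr0, hfl⟩ := hflat k π (fun v hv => (hπ v).2 hv) κ hκ
  obtain ⟨r1, hr1, hr1O⟩ := Metric.isOpen_iff.1 (hO.inter isOpen_ball) p ⟨hp, mem_ball_self hr0⟩
  let r := r1 / 4
  have hr : 0 < r := by positivity
  have hball : closedBall p (2 * r) ⊆ O ∩ ball p r0 :=
    (closedBall_subset_ball (by simp only [r]; linarith)).trans hr1O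
  obtain ⟨θ, T', hθ, hθ0, hθ1, hθone, hts, hT1, hT2⟩ := exists_bump p r hr
  have hT'0 : 0 ≤ T' := (norm_nonneg _).trans (hT1 p)
  let N := ∑ j, ‖l j‖
  have hN : ∀ j, ‖l j‖ ≤ N := fun j =>
    Finset.single_le_sum (f := fun j => ‖l j‖) (fun _ _ => norm_nonneg _) (Finset.mem_univ j)
  have hN0 : 0 ≤ N := Finset.sum_nonneg fun _ _ => norm_nonneg _
  -- extensions
  have hext : ∀ j, ∃ H : E → ℝ, LipschitzWith κ H ∧ EqOn (l j) H (M ∩ ball p r0) := by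
    intro j
    apply LipschitzOnWith.extend_real
    refine LipschitzOnWith.of_dist_le_mul fun x hx y hy => ?_
    rw [dist_eq_norm, dist_eq_norm]
    refine le_trans ?_ (hfl x hx y hy)
    exact norm_le_pi_norm (π x - π y) j
  choose H hH hHl using hext
  set Kc := 4 * a * T' * (N + a) + a^2 * T' with hKc
  have hKc0 : 0 ≤ Kc := by positivity
  refine ⟨r, hr, (closedBall_subset_closedBall (by linarith)).trans
    (hball.trans inter_subset_left), c0 / 16, by positivity, fun ε hε => ?_⟩
  obtain ⟨s, hs, hs1, hsε, hsc⟩ : ∃ s : ℝ, 0 < s ∧ s ≤ 1 ∧ k * s * Kc / 2 ≤ ε ∧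
      k * s * Kc / 2 ≤ c0 / 16 := by
    set m := min ε (c0 / 16)
    have hm : 0 < m := by positivity
    refine ⟨min 1 (m / (k * Kc + 1)), by positivity, min_le_left _ _, ?_⟩
    have h2 : min 1 (m / (k * Kc + 1)) ≤ m / (k * Kc + 1) := min_le_right _ _
    rw [le_div_iff₀ (by positivity)] at h2
    set s := min 1 (m / (k * Kc + 1))
    have h0 : 0 < s := by positivity
    have hkK : (0:ℝ) ≤ k * Kc := by positivity
    have h3 : k * s * Kc / 2 ≤ m := by nlinarith
    exact ⟨h3.trans (min_le_left _ _), h3.trans (min_le_right _ _)⟩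
  choose h hh2 hh0 hh1 hhd using fun j => hmol κ (H j) (hH j) s hs
  rw [hκC] at hh0 hh1 hhd
  let q : Fin k → E → ℝ := fun j y => θ y * ((l j y - h j y) * (l j y - h j y))
  have hq : ∀ j, ContDiff ℝ 2 (q j) := fun j =>
    hθ.mul (((l j).contDiff.sub (hh2 j)).mul ((l j).contDiff.sub (hh2 j)))
  let ψ : E → ℝ := fun y => ∑ j, q j y
  have hψ : ContDiff ℝ 2 ψ := ContDiff.sum fun j _ => hq j
  have hsupp : tsupport ψ ⊆ closedBall p (2 * r) := by
    refine subset_trans ?_ hts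
    refine closure_mono fun y hy => ?_
    rw [Function.mem_support] at hy ⊢
    intro h0
    apply hy
    simp [ψ, q, h0]
  have main : ∀ x ∈ M ∩ ball p r0, ∀ v,
      (θ x * (c0 / 8) - k * s * Kc / 2) * ‖v‖^2 ≤ leviForm ψ x v := by
    intro x hx v
    have hbd : ∀ j v, θ x * ((l j v)^2 - 4 * a^2 * ‖v‖^2) - s * Kc * ‖v‖^2 ≤
        fderiv ℝ (fderiv ℝ (q j)) x v v := by
      intro j v
      refine d2_bound θ (h j) (l j) hθ (hh2 j) x a s T' N ha.le hs hs1 (hθ0 x)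
        (hT1 x) (hT2 x) (hN j) ?_ (hh1 j x)
        (hhd j x) v
      rw [hHl j hx, abs_sub_comm]
      exact hh0 j x
    rw [levi_sum Finset.univ q x (fun j => (hq j).contDiffAt) v]
    have hI : ‖Complex.I • v‖ = ‖v‖ := by simp [norm_smul]
    have h1 : ∀ j, (1/4) * (θ x * ((l j v)^2 + (l j (Complex.I • v))^2)
        - (θ x * (8 * a^2 * ‖v‖^2) + 2 * s * Kc * ‖v‖^2)) ≤ leviForm (q j) x v := by
      intro j
      have e1 := hbd j v
      have e2 := hbd j (Complex.I • v)
      rw [hI] at e2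
      unfold leviForm
      linarith
    refine le_trans ?_ (Finset.sum_le_sum fun j _ => h1 j)
    rw [← Finset.mul_sum, Finset.sum_sub_distrib, ← Finset.mul_sum, Finset.sum_const,
      Finset.card_univ, Fintype.card_fin, nsmul_eq_mul]
    have h2 := mul_le_mul_of_nonneg_left (hc0 v) (hθ0 x)
    have h3 : θ x * (8 * k * a^2 * ‖v‖^2) ≤ θ x * (c0 / 2 * ‖v‖^2) := by
      have := hθ0 x
      gcongr
    linear_combination (1/4) * h2 + (1/4) * h3
  refine ⟨ψ, hψ, hsupp.trans (hball.trans inter_subset_left), ?_, ?_⟩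
  · intro x hx v
    by_cases hxb : x ∈ closedBall p (2 * r)
    · refine le_trans ?_ (main x ⟨hx, (hball hxb).2⟩ v)
      have := hθ0 x
      have h5 := mul_nonneg this hc0pos.le
      refine mul_le_mul_of_nonneg_right ?_ (sq_nonneg _)
      linarith
    · have h0 : ψ =ᶠ[𝓝 x] fun _ => 0 :=
        notMem_tsupport_iff_eventuallyEq.1 fun hh => hxb (hsupp hh)
      rw [levi_congr h0, levi_zero]
      have : 0 ≤ ε * ‖v‖^2 := by positivity
      linarith
  · intro x hx v
    refine le_trans ?_ (main x ⟨hx.1, (hball (closedBall_subset_closedBall (by linarith) hx.2)).2⟩ v)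
    have h1 : θ x = 1 := hθone x hx.2
    rw [h1]
    gcongr
    linarith

end Levi

section Global

open Metric Set
open scoped NNReal

variable {E : Type*} [NormedAddCommGroup E] [NormedSpace ℂ E] [FiniteDimensional ℂ E]

/-- Strong plurisubharmonicity at a point. -/
def SpshAt {E : Type*} [NormedAddCommGroup E] [NormedSpace ℂ E] (ρ : E → ℝ) (x : E) : Prop :=
  ∀ v, v ≠ 0 → 0 < leviForm ρ x v

lemma SpshAt.congr {f g : E → ℝ} {x : E} (hf : SpshAt f x) (h : f =ᶠ[𝓝 x] g) : SpshAt g x := by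
  intro v hv
  rw [← levi_congr h v]
  exact hf v hv

lemma levi_continuousOn {V : Set E} (hV : IsOpen V) {ρ : E → ℝ} (hρ : ContDiffOn ℝ 2 ρ V) :
    ContinuousOn (fun z : E × E => leviForm ρ z.1 z.2) (V ×ˢ univ) := by
  have h1 : ContDiffOn ℝ 1 (fderiv ℝ ρ) V := hρ.fderiv_of_isOpen hV (by norm_num)
  have h2 : ContinuousOn (fderiv ℝ (fderiv ℝ ρ)) V :=
    h1.continuousOn_fderiv_of_isOpen hV (by norm_num)
  have h3 : ContinuousOn (fun z : E × E => fderiv ℝ (fderiv ℝ ρ) z.1) (V ×ˢ univ) :=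
    h2.comp continuousOn_fst (fun z hz => hz.1)
  have h4 : ContinuousOn (fun z : E × E => Complex.I • z.2) (V ×ˢ (univ : Set E)) := by fun_prop
  have h5 : ContinuousOn (fun z : E × E => z.2) (V ×ˢ (univ : Set E)) := continuousOn_snd
  unfold leviForm
  exact continuousOn_const.mul (((h3.clm_apply h5).clm_apply h5).add
    ((h3.clm_apply h4).clm_apply h4))

lemma levi_smul (ρ : E → ℝ) (x v : E) (t : ℝ) :
    leviForm ρ x (t • v) = t^2 * leviForm ρ x v := by
  unfold leviForm
  rw [smul_comm Complex.I t v]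
  simp only [map_smul, smul_apply, smul_eq_mul]
  ring

lemma levi_lower {V K : Set E} (hV : IsOpen V) {ρ : E → ℝ} (hρ : ContDiffOn ℝ 2 ρ V)
    (hK : IsCompact K) (hKV : K ⊆ V) :
    ∃ b : ℝ, (∀ x ∈ K, ∀ v, b * ‖v‖^2 ≤ leviForm ρ x v) ∧ ((∀ x ∈ K, SpshAt ρ x) → 0 < b) := by
  refine quad_lower K hK (fun x v => leviForm ρ x v)
    ((levi_continuousOn hV hρ).mono (prod_mono hKV le_rfl)) ?_
  intro x t v
  exact levi_smul ρ x v t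

lemma isOpen_spsh {V : Set E} (hV : IsOpen V) {ρ : E → ℝ} (hρ : ContDiffOn ℝ 2 ρ V) :
    IsOpen {x | x ∈ V ∧ SpshAt ρ x} := by
  have : ProperSpace E := FiniteDimensional.proper ℂ E
  rw [isOpen_iff_mem_nhds]
  rintro x ⟨hx, hs⟩
  have hc := levi_continuousOn hV hρ
  have h1 : ∀ᶠ y in 𝓝 x, ∀ v ∈ sphere (0:E) 1, 0 < leviForm ρ y v := by
    refine (isCompact_sphere (0:E) 1).eventually_forall_of_forall_eventually
      (P := fun y v => 0 < leviForm ρ y v) ?_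
    intro v hv
    have hca : ContinuousAt (fun z : E × E => leviForm ρ z.1 z.2) (x, v) :=
      hc.continuousAt ((hV.prod isOpen_univ).mem_nhds ⟨hx, trivial⟩)
    refine hca.eventually (lt_mem_nhds (hs v ?_))
    rintro rfl
    simp at hv
  filter_upwards [h1, hV.mem_nhds hx] with y hy hyV
  refine ⟨hyV, fun v hv => ?_⟩
  have hn : 0 < ‖v‖ := norm_pos_iff.2 hv
  have h2 := hy (((‖v‖⁻¹ : ℝ)) • v) (by simp [norm_smul, hn.ne'])
  rw [levi_smul] at h2
  have hp : 0 < (‖v‖⁻¹)^2 := by positivity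
  exact (mul_pos_iff_of_pos_left hp).1 h2

/-- The local building blocks along the set `B` near `p`. -/
def HasLocalFns {E : Type*} [NormedAddCommGroup E] [NormedSpace ℂ E] (B : Set E) (p : E) : Prop :=
  ∀ O : Set E, IsOpen O → p ∈ O →
    ∃ r > 0, closedBall p r ⊆ O ∧ ∃ c > 0, ∀ ε > 0, ∃ ψ : E → ℝ, ContDiff ℝ 2 ψ ∧
      tsupport ψ ⊆ O ∧ (∀ x ∈ B, ∀ v, -ε * ‖v‖^2 ≤ leviForm ψ x v) ∧
      ∀ x ∈ B ∩ closedBall p r, ∀ v, c * ‖v‖^2 ≤ leviForm ψ x v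

lemma compact_inter_of_relClosed {V B X : Set E} (hVB : IsOpen (V \ B))
    (hX : IsCompact X) (hXV : X ⊆ V) : IsCompact (B ∩ X) := by
  have : B ∩ X = X ∩ (V \ B)ᶜ := by
    ext x; constructor
    · rintro ⟨h1, h2⟩; exact ⟨h2, fun h => h.2 h1⟩
    · rintro ⟨h1, h2⟩; exact ⟨by_contra fun h => h2 ⟨hXV h1, h⟩, h1⟩
  rw [this]
  exact hX.inter_right hVB.isClosed_compl

lemma local_step {V B : Set E} (hV : IsOpen V) (hBV : B ⊆ V) (hVB : IsOpen (V \ B)) {p : E}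
    (hloc : HasLocalFns B p) {O : Set E} (hO : IsOpen O) (hOV : O ⊆ V) (hp : p ∈ O) :
    ∃ r > 0, IsCompact (B ∩ closedBall p r) ∧ ∀ (C : Set E), IsCompact C → C ⊆ B → ∀ ρ : E → ℝ,
      ContDiffOn ℝ 2 ρ V → (∀ x ∈ C, SpshAt ρ x) →
      ∃ ψ : E → ℝ, ContDiff ℝ 2 ψ ∧ tsupport ψ ⊆ O ∧
        ∀ x ∈ C ∪ (B ∩ closedBall p r), SpshAt (fun y => ρ y + ψ y) x := by
  have : ProperSpace E := FiniteDimensional.proper ℂ E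
  obtain ⟨r, hr, hrO, c, hc, hfn⟩ := hloc O hO hp
  have hcomp : IsCompact (B ∩ closedBall p r) :=
    compact_inter_of_relClosed hVB (isCompact_closedBall p r) (hrO.trans hOV)
  refine ⟨r, hr, hcomp, ?_⟩
  intro C hC hCB ρ hρ hsp
  obtain ⟨δ, hδ, hδ0⟩ := levi_lower hV hρ hC (hCB.trans hBV)
  replace hδ0 := hδ0 hsp
  obtain ⟨b, hb, -⟩ := levi_lower hV hρ hcomp (inter_subset_left.trans hBV)
  set A := (|b| + 1) / c with hA
  have hA0 : 0 < A := by positivity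
  obtain ⟨ψ, hψ, hsupp, hψ1, hψ2⟩ := hfn (δ / (2 * A)) (by positivity)
  refine ⟨fun y => A * ψ y, contDiff_const.mul hψ, ?_, ?_⟩
  · refine (closure_mono ?_).trans hsupp
    intro y hy
    rw [Function.mem_support] at hy ⊢
    exact right_ne_zero_of_mul hy
  · intro x hx v hv
    have hxB : x ∈ B := hx.elim (fun h => hCB h) (fun h => h.1)
    have hρx : ContDiffAt ℝ 2 ρ x := hρ.contDiffAt (hV.mem_nhds (hBV hxB))
    rw [levi_add hρx (contDiff_const.mul hψ).contDiffAt, levi_const_mul hψ.contDiffAt]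
    have hn : 0 < ‖v‖^2 := by have := norm_pos_iff.2 hv; positivity
    rcases hx with hx | hx
    · have h1 := hδ x hx v
      have h2 := mul_le_mul_of_nonneg_left (hψ1 x hxB v) hA0.le
      have h3 : A * (-(δ / (2 * A)) * ‖v‖^2) = - (δ / 2 * ‖v‖^2) := by field_simp
      rw [h3] at h2
      have h4 := mul_pos hδ0 hn
      linarith
    · have h1 := hb x hx v
      have h2 := mul_le_mul_of_nonneg_left (hψ2 x hx v) hA0.le
      have h3 : A * (c * ‖v‖^2) = (|b| + 1) * ‖v‖^2 := by rw [hA]; field_simp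
      rw [h3] at h2
      have h4 := mul_le_mul_of_nonneg_right (neg_abs_le b) hn.le
      linarith

lemma tsupport_add_subset {O : Set E} {f g : E → ℝ} (hf : tsupport f ⊆ O) (hg : tsupport g ⊆ O) :
    tsupport (fun y => f y + g y) ⊆ O :=
  (tsupport_add f g).trans (union_subset hf hg)

lemma compact_step {V B : Set E} (hV : IsOpen V) (hBV : B ⊆ V) (hVB : IsOpen (V \ B))
    {O : Set E} (hO : IsOpen O) (hOV : O ⊆ V)
    (hloc : ∀ p ∈ B ∩ O, HasLocalFns B p) (K : Set E) (hK : IsCompact K) (hKB : K ⊆ B ∩ O) :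
    ∀ (C : Set E), IsCompact C → C ⊆ B → ∀ ρ : E → ℝ,
      ContDiffOn ℝ 2 ρ V → (∀ x ∈ C, SpshAt ρ x) →
      ∃ ψ : E → ℝ, ContDiff ℝ 2 ψ ∧ tsupport ψ ⊆ O ∧
        ∀ x ∈ C ∪ K, SpshAt (fun y => ρ y + ψ y) x := by
  let P : Set E → Prop := fun s => ∀ (C : Set E), IsCompact C → C ⊆ B → ∀ ρ : E → ℝ,
      ContDiffOn ℝ 2 ρ V → (∀ x ∈ C, SpshAt ρ x) →
      ∃ ψ : E → ℝ, ContDiff ℝ 2 ψ ∧ tsupport ψ ⊆ O ∧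
        ∃ K', IsCompact K' ∧ K' ⊆ B ∧ (B ∩ s) ⊆ K' ∧
        ∀ x ∈ C ∪ K', SpshAt (fun y => ρ y + ψ y) x
  have hP : P K := by
    refine hK.induction_on (p := P) ?_ ?_ ?_ ?_
    · intro C hC hCB ρ hρ hs
      refine ⟨fun _ => 0, contDiff_const, by simp [tsupport], ∅, isCompact_empty, by simp,
        by simp, ?_⟩
      simpa using hs
    · intro s t hst ht C hC hCB ρ hρ hs
      obtain ⟨ψ, h1, h2, K', h3, h4, h5, h6⟩ := ht C hC hCB ρ hρ hs
      exact ⟨ψ, h1, h2, K', h3, h4, (inter_subset_inter_right _ hst).trans h5, h6⟩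
    · intro s t hs ht C hC hCB ρ hρ hsp
      obtain ⟨ψ, h1, h2, K', h3, h4, h5, h6⟩ := hs C hC hCB ρ hρ hsp
      obtain ⟨ψ', h1', h2', K'', h3', h4', h5', h6'⟩ := ht (C ∪ K') (hC.union h3)
        (union_subset hCB h4) (fun y => ρ y + ψ y) (hρ.add h1.contDiffOn) h6
      refine ⟨fun y => ψ y + ψ' y, h1.add h1', tsupport_add_subset h2 h2', K' ∪ K'', h3.union h3',
        union_subset h4 h4', ?_, ?_⟩
      · rw [inter_union_distrib_left]
        exact union_subset_union h5 h5'
      · intro x hx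
        rw [← union_assoc] at hx
        simpa only [add_assoc] using h6' x hx
    · intro p hp
      obtain ⟨r, hr, hcomp, hst⟩ := local_step hV hBV hVB (hloc p (hKB hp)) hO hOV (hKB hp).2
      refine ⟨closedBall p r, mem_nhdsWithin_of_mem_nhds (closedBall_mem_nhds p hr), ?_⟩
      intro C hC hCB ρ hρ hs
      obtain ⟨ψ, h1, h2, h3⟩ := hst C hC hCB ρ hρ hs
      exact ⟨ψ, h1, h2, _, hcomp, inter_subset_left, le_rfl, h3⟩
  intro C hC hCB ρ hρ hs
  obtain ⟨ψ, h1, h2, K', h3, h4, h5, h6⟩ := hP C hC hCB ρ hρ hs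
  refine ⟨ψ, h1, h2, fun x hx => h6 x ?_⟩
  exact hx.imp id fun h => h5 ⟨(hKB h).1, h⟩

/-- A nonnegative `C²` function whose support is a given open set. -/
lemma exists_pos_fn {V : Set E} (hV : IsOpen V) : ∃ f : E → ℝ, ContDiff ℝ 2 f ∧
    (∀ x, 0 ≤ f x) ∧ (∀ x, f x ≤ 1) ∧ ∀ x, 0 < f x ↔ x ∈ V := by
  have hfd : FiniteDimensional ℝ E := FiniteDimensional.complexToReal E
  obtain ⟨f, hf, hc, hr⟩ := hV.exists_contDiff_support_eq (n := 2)
  have h0 : ∀ x, 0 ≤ f x := fun x => (hr ⟨x, rfl⟩).1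
  refine ⟨f, by exact_mod_cast hc, h0, fun x => (hr ⟨x, rfl⟩).2, fun x => ?_⟩
  rw [← hf, Function.mem_support]
  exact ⟨fun h => h.ne', fun h => lt_of_le_of_ne (h0 x) h.symm⟩

lemma global_step {V A B : Set E} (hV : IsOpen V) (hBV : B ⊆ V) (hVB : IsOpen (V \ B))
    (hVA : IsOpen (V \ A)) (hAB : A ⊆ B)
    (hloc : ∀ p ∈ B \ A, HasLocalFns B p)
    (ρ₀ : E → ℝ) (hρ₀ : ContDiffOn ℝ 2 ρ₀ V) (hA : ∀ x ∈ A, SpshAt ρ₀ x) :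
    ∃ ρ : E → ℝ, ContDiffOn ℝ 2 ρ V ∧ ∀ x ∈ B, SpshAt ρ x := by
  have : ProperSpace E := FiniteDimensional.proper ℂ E
  obtain ⟨f, hf, hf0, hf1, hfs⟩ := exists_pos_fn hV
  obtain ⟨fA, hfA, hfA0, -, hfAs⟩ := exists_pos_fn hVA
  obtain ⟨fD, hfD, hfD0, -, hfDs⟩ := exists_pos_fn (isOpen_spsh hV hρ₀)
  have hfAc := hfA.continuous
  have hfDc := hfD.continuous
  have hfc := hf.continuous
  -- exhaustion
  let Kc : ℝ → Set E := fun a => {x | 1 + ‖x‖ ≤ a * f x}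
  let Oc : ℝ → Set E := fun a => {x | 1 + ‖x‖ < a * f x}
  have hKclosed : ∀ a, IsClosed (Kc a) := fun a =>
    isClosed_le (by fun_prop) (by fun_prop)
  have hOopen : ∀ a, IsOpen (Oc a) := fun a =>
    isOpen_lt (by fun_prop) (by fun_prop)
  have hmem : ∀ a x, x ∈ Kc a → 0 < f x := by
    intro a x hx
    have h1 : 1 + ‖x‖ ≤ a * f x := hx
    rcases (hf0 x).lt_or_eq with h | h
    · exact h
    · rw [← h] at h1
      linarith [norm_nonneg x]
  have hKV : ∀ a, Kc a ⊆ V := fun a x hx => (hfs x).1 (hmem a x hx)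
  have hmono : ∀ a b, a ≤ b → Kc a ⊆ Kc b := by
    intro a b hab x hx
    have h1 : 1 + ‖x‖ ≤ a * f x := hx
    exact h1.trans (mul_le_mul_of_nonneg_right hab (hf0 x))
  have hOK : ∀ a, Oc a ⊆ Kc a := by
    intro a x hx
    have h1 : 1 + ‖x‖ < a * f x := hx
    show 1 + ‖x‖ ≤ a * f x
    exact h1.le
  have hKcomp : ∀ a, IsCompact (Kc a) := by
    intro a
    refine (isCompact_closedBall (0:E) |a|).of_isClosed_subset (hKclosed a) ?_
    intro x hx
    have h1 : 1 + ‖x‖ ≤ a * f x := hx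
    have h2 : a * f x ≤ |a| * 1 := by
      calc a * f x ≤ |a| * f x := mul_le_mul_of_nonneg_right (le_abs_self a) (hf0 x)
        _ ≤ |a| * 1 := mul_le_mul_of_nonneg_left (hf1 x) (abs_nonneg a)
    rw [mem_closedBall, dist_zero_right]
    linarith
  have hAV : A ⊆ V := hAB.trans hBV
  have hnb : ∀ x ∈ V, fA x = 0 → 0 < fD x := by
    intro x hx h
    have hxA : x ∈ A := by
      by_contra hn
      have := (hfAs x).2 ⟨hx, hn⟩
      linarith
    exact (hfDs x).2 ⟨hx, hA x hxA⟩
  let R : Set E := {x | fA x ≤ 2 * fD x}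
  let R' : Set E := {x | 2 * fD x ≤ fA x}
  let G : Set E := {x | fD x < fA x}
  have hR : IsClosed R := isClosed_le (by fun_prop) (by fun_prop)
  have hR' : IsClosed R' := isClosed_le (by fun_prop) (by fun_prop)
  have hG : IsOpen G := isOpen_lt (by fun_prop) (by fun_prop)
  have hGVA : G ⊆ V \ A := fun x hx => (hfAs x).1 (lt_of_le_of_lt (hfD0 x) hx)
  have hR'G : ∀ x ∈ V, x ∈ R' → x ∈ G := by
    intro x hx h
    have h1 : 2 * fD x ≤ fA x := h
    show fD x < fA x
    rcases (hfD0 x).lt_or_eq with h2 | h2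
    · linarith
    · rcases (hfA0 x).lt_or_eq with h3 | h3
      · linarith
      · have := hnb x hx h3.symm
        linarith
  -- one step of the exhaustion
  let Good : ℕ → (E → ℝ) → Prop := fun j ρ => ContDiffOn ℝ 2 ρ V ∧
    ∀ x ∈ B ∩ (R ∪ Kc j), SpshAt ρ x
  have step : ∀ (j : ℕ) (ρ : E → ℝ), Good j ρ → ∃ ρ' : E → ℝ, Good (j + 1) ρ' ∧
      ∀ x ∈ Kc ((j:ℝ) - 1), ρ' x = ρ x := by
    intro j ρ ⟨hρ, hsp⟩
    let O : Set E := (Oc ((j:ℝ) + 2) ∩ G) \ Kc ((j:ℝ) - 1)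
    have hO : IsOpen O := ((hOopen _).inter hG).sdiff (hKclosed _)
    have hOV : O ⊆ V := fun x hx => (hGVA hx.1.2).1
    let C : Set E := B ∩ (Kc ((j:ℝ) + 2) ∩ (R ∪ Kc j))
    have hC : IsCompact C := compact_inter_of_relClosed hVB
      ((hKcomp _).inter_right (hR.union (hKclosed _))) (inter_subset_left.trans (hKV _))
    let K : Set E := B ∩ ((Kc ((j:ℝ) + 1) ∩ R') \ Oc j)
    have hK : IsCompact K := compact_inter_of_relClosed hVB
      (((hKcomp _).inter_right hR').diff (hOopen _)) (fun x hx => hKV _ hx.1.1)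
    have hKO : K ⊆ B ∩ O := by
      rintro x ⟨hxB, ⟨hx1, hx2⟩, hx3⟩
      have hfx := hmem _ _ hx1
      have h1 : 1 + ‖x‖ ≤ ((j:ℝ) + 1) * f x := hx1
      have h3 : ¬ (1 + ‖x‖ < (j:ℝ) * f x) := hx3
      refine ⟨hxB, ⟨?_, hR'G x (hBV hxB) hx2⟩, ?_⟩
      · show 1 + ‖x‖ < ((j:ℝ) + 2) * f x
        linarith
      · intro h4
        have h4 : 1 + ‖x‖ ≤ ((j:ℝ) - 1) * f x := h4
        apply h3
        linarith
    obtain ⟨ψ, hψ, hψO, hψs⟩ := compact_step hV hBV hVB hO hOV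
      (fun p hp => hloc p ⟨hp.1, (hGVA hp.2.1.2).2⟩) K hK hKO C hC inter_subset_left ρ hρ
      (fun x hx => hsp x ⟨hx.1, hx.2.2⟩)
    have hoff : ∀ x, x ∉ O → ρ =ᶠ[𝓝 x] fun y => ρ y + ψ y := by
      intro x hx
      have h0 : ψ =ᶠ[𝓝 x] 0 := notMem_tsupport_iff_eventuallyEq.1 fun h => hx (hψO h)
      filter_upwards [h0] with y hy
      rw [hy]; simp
    refine ⟨fun y => ρ y + ψ y, ⟨hρ.add hψ.contDiffOn, ?_⟩, ?_⟩
    · rintro x ⟨hxB, hx⟩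
      push_cast at hx
      by_cases h2 : x ∈ Kc ((j:ℝ) + 2)
      · by_cases h3 : x ∈ R ∪ Kc j
        · exact hψs x (Or.inl ⟨hxB, h2, h3⟩)
        · have hnR : x ∉ R := fun h => h3 (Or.inl h)
          have hnK : x ∉ Kc j := fun h => h3 (Or.inr h)
          refine hψs x (Or.inr ⟨hxB, ⟨hx.resolve_left hnR, ?_⟩, fun h => hnK (hOK _ h)⟩)
          have hnR2 : ¬ fA x ≤ 2 * fD x := hnR
          show 2 * fD x ≤ fA x
          exact (not_le.1 hnR2).le
      · have hxR : x ∈ R := by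
          rcases hx with hx | hx
          · exact hx
          · exact (h2 (hmono _ _ (by linarith) hx)).elim
        refine (hsp x ⟨hxB, Or.inl hxR⟩).congr (hoff x fun h => h2 (hOK _ h.1.1))
    · intro x hx
      exact ((hoff x fun h => h.2 hx).eq_of_nhds).symm
  have h0 : Good 0 ρ₀ := by
    refine ⟨hρ₀, ?_⟩
    rintro x ⟨hxB, hx | hx⟩
    · have h1 : fA x ≤ 2 * fD x := hx
      have hD : 0 < fD x := by
        by_contra hn
        have h2 : fA x = 0 := le_antisymm (by linarith) (hfA0 x)
        exact hn (hnb x (hBV hxB) h2)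
      exact ((hfDs x).1 hD).2
    · have h1 : 1 + ‖x‖ ≤ ((0:ℕ):ℝ) * f x := hx
      push_cast at h1
      linarith [norm_nonneg x]
  choose nxt hnxt1 hnxt2 using step
  let seq : (j : ℕ) → {ρ : E → ℝ // Good j ρ} := fun j =>
    Nat.rec ⟨ρ₀, h0⟩ (fun j ρ => ⟨nxt j ρ.1 ρ.2, hnxt1 j ρ.1 ρ.2⟩) j
  have hseq : ∀ j : ℕ, ∀ x ∈ Kc ((j:ℝ) - 1), (seq (j + 1)).1 x = (seq j).1 x :=
    fun j x hx => hnxt2 j (seq j).1 (seq j).2 x hx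
  have hstab : ∀ i j : ℕ, i ≤ j → ∀ x ∈ Kc ((i:ℝ) - 1), (seq j).1 x = (seq i).1 x := by
    intro i j hij x hx
    induction j, hij using Nat.le_induction with
    | base => rfl
    | succ j hij ih =>
      rw [← ih]
      refine hseq j x (hmono _ _ ?_ hx)
      have : (i:ℝ) ≤ j := by exact_mod_cast hij
      linarith
  let N : E → ℕ := fun x => ⌈(1 + ‖x‖) / f x⌉₊ + 1
  have hN : ∀ x ∈ V, x ∈ Kc ((N x : ℝ) - 1) := by
    intro x hx
    have hfx := (hfs x).2 hx
    show 1 + ‖x‖ ≤ ((N x : ℝ) - 1) * f x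
    have := Nat.le_ceil ((1 + ‖x‖) / f x)
    rw [div_le_iff₀ hfx] at this
    simp only [N]; push_cast
    linarith
  let ρ : E → ℝ := fun x => (seq (N x)).1 x
  have hρj : ∀ j : ℕ, ∀ x ∈ Kc ((j:ℝ) - 1), ρ x = (seq j).1 x := by
    intro j x hx
    rcases le_total (N x) j with h | h
    · exact (hstab _ _ h x (hN x (hKV _ hx))).symm
    · exact hstab _ _ h x hx
  have hev : ∀ x ∈ V, ∃ j : ℕ, x ∈ Kc j ∧ (seq j).1 =ᶠ[𝓝 x] ρ := by
    intro x hx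
    refine ⟨N x + 1, hmono _ _ (by push_cast; linarith) (hN x hx), ?_⟩
    have hxO : x ∈ Oc (((N x + 1 : ℕ) : ℝ) - 1) := by
      have h1 : 1 + ‖x‖ ≤ ((N x : ℝ) - 1) * f x := hN x hx
      have hfx := (hfs x).2 hx
      show 1 + ‖x‖ < (((N x + 1 : ℕ) : ℝ) - 1) * f x
      push_cast
      linarith
    filter_upwards [(hOopen _).mem_nhds hxO] with y hy
    exact (hρj _ y (hOK _ hy)).symm
  refine ⟨ρ, ?_, ?_⟩
  · intro x hx
    obtain ⟨j, -, hj⟩ := hev x hx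
    exact (((seq j).2.1.contDiffAt (hV.mem_nhds hx)).congr_of_eventuallyEq hj.symm).contDiffWithinAt
  · intro x hx
    obtain ⟨j, hxj, hj⟩ := hev x (hBV hx)
    exact ((seq j).2.2 x ⟨hx, Or.inr hxj⟩).congr hj

lemma flat_of_chart {M : Set E} {p : E} {d : ℕ}
    {W : Set E} (hW : IsOpen W) (hpW : p ∈ W) (hpM : p ∈ M)
    (Ω : Set (EuclideanSpace ℝ (Fin d))) (g : EuclideanSpace ℝ (Fin d) → E)
    (g' : E → EuclideanSpace ℝ (Fin d)) (hΩ : IsOpen Ω) (hg : ContDiffOn ℝ 1 g Ω)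
    (himg : g '' Ω = M ∩ W) (hg' : ContinuousOn g' (M ∩ W)) (hinv : ∀ t ∈ Ω, g' (g t) = t)
    (hinj : ∀ t ∈ Ω, Function.Injective (fderivWithin ℝ g Ω t) ∧
      ∀ v ∈ Set.range (fderivWithin ℝ g Ω t),
            Complex.I • v ∈ Set.range (fderivWithin ℝ g Ω t) → v = 0) :
    ∃ T : Submodule ℝ E, (∀ v ∈ T, Complex.I • v ∈ T → v = 0) ∧
     ∀ (k : ℕ) (π : E →L[ℝ] (Fin k → ℝ)), (∀ v ∈ T, π v = 0) → ∀ κ : ℝ, 0 < κ →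
      ∃ r > 0, ∀ x ∈ M ∩ ball p r, ∀ y ∈ M ∩ ball p r, ‖π x - π y‖ ≤ κ * ‖x - y‖ := by
  obtain ⟨t0, ht0, rfl⟩ : p ∈ g '' Ω := himg ▸ ⟨hpM, hpW⟩
  have hcd : ContDiffAt ℝ 1 g t0 := hg.contDiffAt (hΩ.mem_nhds ht0)
  have hstrict := hcd.hasStrictFDerivAt (by norm_num)
  rw [← fderivWithin_of_isOpen hΩ ht0] at hstrict
  obtain ⟨hi, htr⟩ := hinj t0 ht0
  set L := fderivWithin ℝ g Ω t0 with hL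
  refine ⟨LinearMap.range (L : EuclideanSpace ℝ (Fin d) →ₗ[ℝ] E), ?_, ?_⟩
  · rintro v ⟨w, hw⟩ ⟨w', hw'⟩
    exact htr v ⟨w, hw⟩ ⟨w', hw'⟩
  intro k π hπ κ hκ
  obtain ⟨c, hc, hanti⟩ := LinearMap.exists_antilipschitzWith
    (L : EuclideanSpace ℝ (Fin d) →ₗ[ℝ] E) (LinearMap.ker_eq_bot.2 hi)
  have hc' : (0:ℝ) < c := hc
  have hbelow : ∀ w, ‖w‖ ≤ c * ‖L w‖ := fun w => by
    have := hanti.le_mul_dist w 0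
    simpa using this
  -- small constant
  obtain ⟨η, hη, hη1, hη2⟩ : ∃ η : ℝ, 0 < η ∧ c * η ≤ 1/2 ∧ ‖π‖ * η * (2 * c) ≤ κ := by
    refine ⟨min (1 / (2 * c)) (κ / ((‖π‖ + 1) * (2 * c))), by positivity, ?_, ?_⟩
    · have := min_le_left (1 / (2 * (c:ℝ))) (κ / ((‖π‖ + 1) * (2 * c)))
      rw [le_div_iff₀ (by positivity)] at this
      linarith
    · have := min_le_right (1 / (2 * (c:ℝ))) (κ / ((‖π‖ + 1) * (2 * c)))
      rw [le_div_iff₀ (by positivity)] at this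
      refine le_trans ?_ this
      have h0 : 0 ≤ min (1 / (2 * (c:ℝ))) (κ / ((‖π‖ + 1) * (2 * c))) := by positivity
      nlinarith [mul_nonneg h0 hc'.le]
  have hlo := hstrict.isLittleO.def hη
  rw [nhds_prod_eq] at hlo
  obtain ⟨S, hS, hSp⟩ := Filter.mem_prod_self_iff.1 hlo
  have hcont : ContinuousWithinAt g' (M ∩ W) (g t0) := hg' _ ⟨hpM, hpW⟩
  have hpre : g' ⁻¹' S ∈ 𝓝[M ∩ W] (g t0) := by
    apply hcont
    rw [hinv t0 ht0]; exact hS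
  rw [Metric.mem_nhdsWithin_iff] at hpre
  obtain ⟨r1, hr1, hr1S⟩ := hpre
  obtain ⟨r2, hr2, hr2W⟩ := Metric.isOpen_iff.1 hW (g t0) hpW
  have hpt : ∀ x ∈ M ∩ ball (g t0) (min r1 r2), ∃ t ∈ S, g t = x := by
    rintro x ⟨hxM, hxb⟩
    have hxW : x ∈ W := hr2W (ball_subset_ball (min_le_right _ _) hxb)
    obtain ⟨t, ht, rfl⟩ : x ∈ g '' Ω := himg ▸ ⟨hxM, hxW⟩
    have : g t ∈ g' ⁻¹' S := hr1S ⟨ball_subset_ball (min_le_left _ _) hxb, hxM, hxW⟩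
    rw [mem_preimage, hinv t ht] at this
    exact ⟨t, this, rfl⟩
  refine ⟨min r1 r2, lt_min hr1 hr2, ?_⟩
  intro x hx y hy
  obtain ⟨t, ht, rfl⟩ := hpt x hx
  obtain ⟨u, hu, rfl⟩ := hpt y hy
  have h1 : ‖g t - g u - L (t - u)‖ ≤ η * ‖t - u‖ := hSp (Set.mk_mem_prod ht hu)
  have h2 := hbelow (t - u)
  have h3 : ‖L (t - u)‖ ≤ ‖g t - g u‖ + η * ‖t - u‖ := by
    have := norm_sub_norm_le (L (t - u)) (g t - g u)
    rw [norm_sub_rev (L (t - u))] at this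
    linarith
  have h4 : ‖t - u‖ ≤ 2 * c * ‖g t - g u‖ := by
    have h5 := mul_le_mul_of_nonneg_left h3 hc'.le
    have h6 := mul_le_mul_of_nonneg_right hη1 (norm_nonneg (t - u))
    nlinarith
  have h5 : π (g t) - π (g u) = π (g t - g u - L (t - u)) := by
    rw [map_sub π (g t - g u), map_sub π (g t), hπ (L (t - u)) ⟨t - u, rfl⟩, sub_zero]
  rw [h5]
  calc ‖π (g t - g u - L (t - u))‖ ≤ ‖π‖ * ‖g t - g u - L (t - u)‖ := π.le_opNorm _
    _ ≤ ‖π‖ * (η * (2 * c * ‖g t - g u‖)) := by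
      refine mul_le_mul_of_nonneg_left (h1.trans ?_) (norm_nonneg _)
      exact mul_le_mul_of_nonneg_left h4 hη.le
    _ = ‖π‖ * η * (2 * c) * ‖g t - g u‖ := by ring
    _ ≤ κ * ‖g t - g u‖ := mul_le_mul_of_nonneg_right hη2 (norm_nonneg _)

lemma hasLocalFns_of_chart {V A B : Set E} (hV : IsOpen V) (hBV : B ⊆ V) (hVA : IsOpen (V \ A))
    {p : E} (hp : p ∈ B \ A) (T : Submodule ℝ E)
    (hT : ∀ v ∈ T, Complex.I • v ∈ T → v = 0)
    (hflat : ∀ (k : ℕ) (π : E →L[ℝ] (Fin k → ℝ)), (∀ v ∈ T, π v = 0) → ∀ κ : ℝ, 0 < κ →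
      ∃ r > 0, ∀ x ∈ (B \ A) ∩ ball p r, ∀ y ∈ (B \ A) ∩ ball p r,
        ‖π x - π y‖ ≤ κ * ‖x - y‖) : HasLocalFns B p := by
  intro O hO hpO
  obtain ⟨r, hr, hrO, c, hc, hfn⟩ := exists_local_fn (B \ A) p T hT hflat (O ∩ (V \ A))
    (hO.inter hVA) ⟨hpO, hBV hp.1, hp.2⟩
  refine ⟨r, hr, hrO.trans inter_subset_left, c, hc, fun ε hε => ?_⟩
  obtain ⟨ψ, h1, h2, h3, h4⟩ := hfn ε hε
  refine ⟨ψ, h1, h2.trans inter_subset_left, ?_, ?_⟩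
  · intro x hx v
    by_cases hxA : x ∈ A
    · have h0 : ψ =ᶠ[𝓝 x] fun _ => 0 :=
        notMem_tsupport_iff_eventuallyEq.1 fun hh => (h2 hh).2.2 hxA
      rw [levi_congr h0, levi_zero]
      have : 0 ≤ ε * ‖v‖^2 := by positivity
      linarith
    · exact h3 x ⟨hx, hxA⟩ v
  · intro x hx v
    exact h4 x ⟨⟨hx.1, (hrO hx.2).2.2⟩, hx.2⟩ v

lemma main_general (m : ℕ) (S : Set E) (F : ℕ → Set E)
    (hlc : ∃ (V : Set E) (C : Set E), IsOpen V ∧ IsClosed C ∧ S = V ∩ C)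
    (hF0 : F 0 = S)
    (hanti : ∀ k ≤ m, F (k + 1) ⊆ F k)
    (hempty : F (m + 1) = ∅)
    (hclosed : ∀ k ≤ m + 1, ∃ C : Set E, IsClosed C ∧ F k = S ∩ C)
    (hchart : ∀ k ≤ m, ∀ p ∈ F k \ F (k + 1),
      ∃ V : Set E, IsOpen V ∧ p ∈ V ∧
      ∃ (d : ℕ) (Ω : Set (EuclideanSpace ℝ (Fin d)))
        (g : EuclideanSpace ℝ (Fin d) → E)
        (g' : E → EuclideanSpace ℝ (Fin d)),
        IsOpen Ω ∧ ContDiffOn ℝ 1 g Ω ∧ g '' Ω = (F k \ F (k + 1)) ∩ V ∧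
        ContinuousOn g' ((F k \ F (k + 1)) ∩ V) ∧ (∀ t ∈ Ω, g' (g t) = t) ∧
        ∀ t ∈ Ω, Function.Injective ⇑(fderivWithin ℝ g Ω t) ∧
          ∀ v ∈ Set.range ⇑(fderivWithin ℝ g Ω t),
            Complex.I • v ∈ Set.range ⇑(fderivWithin ℝ g Ω t) → v = 0) :
    ∃ U : Set E, IsOpen U ∧ S ⊆ U ∧
      ∃ ρ : E → ℝ, ContDiffOn ℝ 2 ρ U ∧
        ∀ x ∈ U, ∀ v, v ≠ 0 → 0 < leviForm ρ x v := by
  obtain ⟨V, C, hV, hC, rfl⟩ := hlc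
  have hrel : ∀ k ≤ m + 1, F k ⊆ V ∧ IsOpen (V \ F k) := by
    intro k hk
    obtain ⟨C', hC', h⟩ := hclosed k hk
    refine ⟨?_, ?_⟩
    · rw [h]; exact fun x hx => hx.1.1
    · have : V \ F k = V \ (C ∩ C') := by
        rw [h, inter_assoc, diff_self_inter]
      rw [this]
      exact hV.sdiff (hC.inter hC')
  have key : ∀ i ≤ m + 1, ∃ ρ : E → ℝ, ContDiffOn ℝ 2 ρ V ∧ ∀ x ∈ F (m + 1 - i), SpshAt ρ x := by
    intro i
    induction i with
    | zero =>
      intro _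
      refine ⟨fun _ => 0, contDiffOn_const, ?_⟩
      rw [Nat.sub_zero, hempty]
      simp
    | succ i ih =>
      intro hi
      obtain ⟨ρ₀, hρ₀, hs⟩ := ih (by omega)
      obtain ⟨k, hk1, hk2, hk3⟩ : ∃ k, m + 1 - (i + 1) = k ∧ m + 1 - i = k + 1 ∧ k ≤ m :=
        ⟨m - i, by omega, by omega, by omega⟩
      rw [hk1]; rw [hk2] at hs
      refine global_step hV (hrel k (by omega)).1 (hrel k (by omega)).2 (hrel (k+1) (by omega)).2
        (hanti k hk3) ?_ ρ₀ hρ₀ hs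
      intro p hp
      obtain ⟨W, hW, hpW, d, Ω, g, g', hΩ, hg, himg, hg', hinv, hinj⟩ := hchart k hk3 p hp
      obtain ⟨T, hT, hflat⟩ := flat_of_chart hW hpW hp Ω g g' hΩ hg himg hg' hinv hinj
      exact hasLocalFns_of_chart hV (hrel k (by omega)).1 (hrel (k+1) (by omega)).2 hp T hT hflat
  obtain ⟨ρ, hρ, hs⟩ := key (m + 1) le_rfl
  rw [Nat.sub_self, hF0] at hs
  refine ⟨{x | x ∈ V ∧ SpshAt ρ x}, isOpen_spsh hV hρ, fun x hx => ⟨hx.1, hs x hx⟩, ρ,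
    hρ.mono fun x hx => hx.1, fun x hx => hx.2⟩

end Global

/-- Proposition 2.1 of the paper. Let `S ⊆ ℂⁿ` be a locally
closed set with a finite filtration `S = F 0 ⊇ F 1 ⊇ ⋯ ⊇ F m ⊇ F (m+1) = ∅` by
subsets closed in `S`, such that each difference `F k \ F (k+1)` (for `k ≤ m`) is a
totally real `C¹` embedded submanifold of `ℂⁿ` (possibly with components of
different dimensions): every point `p` of it has an open neighborhood `V` in `ℂⁿ`
such that `(F k \ F (k+1)) ∩ V` is the image of a `C¹` map `g` on an open set
`Ω ⊆ ℝᵈ` which is a homeomorphism onto it (witnessed by a continuous left inverse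
`g'`), whose derivative is injective with totally real range at every point of `Ω`.
Then some open set `U ⊇ S` carries a `C²` function which is strongly
plurisubharmonic at every point of `U`. -/
theorem spsh_function_near_stratified_totally_real_set
    (n m : ℕ) (S : Set (EuclideanSpace ℂ (Fin n)))
    (F : ℕ → Set (EuclideanSpace ℂ (Fin n)))
    (hlc : ∃ (V : Set (EuclideanSpace ℂ (Fin n))) (C : Set (EuclideanSpace ℂ (Fin n))),
      IsOpen V ∧ IsClosed C ∧ S = V ∩ C)
    (hF0 : F 0 = S)
    (hanti : ∀ k ≤ m, F (k + 1) ⊆ F k)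
    (hempty : F (m + 1) = ∅)
    (hclosed : ∀ k ≤ m + 1, ∃ C : Set (EuclideanSpace ℂ (Fin n)),
      IsClosed C ∧ F k = S ∩ C)
    (hchart : ∀ k ≤ m, ∀ p ∈ F k \ F (k + 1),
      ∃ V : Set (EuclideanSpace ℂ (Fin n)), IsOpen V ∧ p ∈ V ∧
      ∃ (d : ℕ) (Ω : Set (EuclideanSpace ℝ (Fin d)))
        (g : EuclideanSpace ℝ (Fin d) → EuclideanSpace ℂ (Fin n))
        (g' : EuclideanSpace ℂ (Fin n) → EuclideanSpace ℝ (Fin d)),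
        IsOpen Ω ∧ ContDiffOn ℝ 1 g Ω ∧ g '' Ω = (F k \ F (k + 1)) ∩ V ∧
        ContinuousOn g' ((F k \ F (k + 1)) ∩ V) ∧ (∀ t ∈ Ω, g' (g t) = t) ∧
        ∀ t ∈ Ω, Function.Injective ⇑(fderivWithin ℝ g Ω t) ∧
          ∀ v ∈ Set.range ⇑(fderivWithin ℝ g Ω t),
            Complex.I • v ∈ Set.range ⇑(fderivWithin ℝ g Ω t) → v = 0) :
    ∃ U : Set (EuclideanSpace ℂ (Fin n)), IsOpen U ∧ S ⊆ U ∧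
      ∃ ρ : EuclideanSpace ℂ (Fin n) → ℝ, ContDiffOn ℝ 2 ρ U ∧
        ∀ x ∈ U, ∀ v, v ≠ 0 → 0 < leviForm ρ x v := by
  exact main_general m S F hlc hF0 hanti hempty hclosed hchart
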